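/- Let U be a 7×7 real matrix of classical rank 3, with rows and columns indexed by ℤ/7ℤ, such that U_{ij} = 0 whenever i ∈ {j−1, j} (indices mod 7) and U_{ij} > 0 otherwise. Then U has nonnegative rank strictly less than 7; that is, there exist a 7×6 matrix B and a 6×7 matrix C, both with all entries nonnegative, such that U = B·C. -/

import Mathlib

/-!
A rank-3 matrix with this zero pattern is, up to positive row factors, the slack matrix of a convex
heptagon `v₀, …, v₆`: the `(i, j)` entry is the determinant `[i, i+1, j]` of `vᵢ, vᵢ₊₁, vⱼ`.
Rescaling the vertices by positive factors makes `v₀ + v₂ = v₁ + v₃` and `v₀ + v₅ = v₄ + v₆`.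
If every row `x` of the rescaled matrix satisfies `x₀ ≤ x₁ + x₄` and `x₀ ≤ x₃ + x₆`, then all rows
are nonnegative combinations of six fixed 0-1 vectors. These conditions amount to two
inequalities between products of determinants. They may fail for a given vertex `v₀`, but not for
all seven choices of it: by the Grassmann–Plücker relations the first one would then fail at every
vertex or the second one at every vertex, and multiplying over the heptagon gives a contradiction.
-/

open Matrix

section NonnegRank

variable {m n m' n' R : Type*} {k : ℕ}

/-- The nonnegative rank of `A` is at most `k`: there is a factorization of `A` through `Fin k`
with nonnegative factors. A bound rather than a number, so that no junk value is needed for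
matrices that have no such factorization. -/
def NonnegRankLE [Semiring R] [PartialOrder R] (A : Matrix m n R) (k : ℕ) : Prop :=
  ∃ (B : Matrix m (Fin k) R) (C : Matrix (Fin k) n R),
    (∀ i j, 0 ≤ B i j) ∧ (∀ i j, 0 ≤ C i j) ∧ A = B * C

namespace NonnegRankLE

section Semiring

variable [Semiring R] [PartialOrder R] {A : Matrix m n R}

theorem of_forall_exists_vecMul_eq {C : Matrix (Fin k) n R} (hC : ∀ l j, 0 ≤ C l j)
    (hA : ∀ i, ∃ f : Fin k → R, (∀ l, 0 ≤ f l) ∧ f ᵥ* C = A i) : NonnegRankLE A k := by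
  choose f hf hfA using hA
  exact ⟨of f, C, hf, hC, funext fun i => (hfA i).symm⟩

protected theorem submatrix (hA : NonnegRankLE A k) (f : m' → m) (g : n' → n) :
    NonnegRankLE (A.submatrix f g) k := by
  obtain ⟨B, C, hB, hC, rfl⟩ := hA
  exact ⟨B.submatrix f id, C.submatrix id g, fun _ _ => hB _ _, fun _ _ => hC _ _, rfl⟩

protected theorem diagonal_mul [IsOrderedRing R] [Fintype m] [DecidableEq m] (hA : NonnegRankLE A k)
    {c : m → R} (hc : ∀ i, 0 ≤ c i) : NonnegRankLE (diagonal c * A) k := by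
  obtain ⟨B, C, hB, hC, rfl⟩ := hA
  refine ⟨diagonal c * B, C, fun i j => ?_, hC, (Matrix.mul_assoc _ _ _).symm⟩
  rw [diagonal_mul]
  exact mul_nonneg (hc i) (hB i j)

protected theorem mul_diagonal [IsOrderedRing R] [Fintype n] [DecidableEq n] (hA : NonnegRankLE A k)
    {c : n → R} (hc : ∀ j, 0 ≤ c j) : NonnegRankLE (A * diagonal c) k := by
  obtain ⟨B, C, hB, hC, rfl⟩ := hA
  refine ⟨B, C * diagonal c, hB, fun i j => ?_, Matrix.mul_assoc _ _ _⟩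
  rw [mul_diagonal]
  exact mul_nonneg (hC i j) (hc j)

end Semiring

theorem of_mul_diagonal [DivisionRing R] [LinearOrder R] [IsStrictOrderedRing R]
    {A : Matrix m n R} [Fintype n] [DecidableEq n] {c : n → R} (hc : ∀ j, 0 < c j)
    (hA : NonnegRankLE (A * diagonal c) k) : NonnegRankLE A k := by
  have cancel : A * diagonal c * diagonal (fun j => (c j)⁻¹) = A := by
    simp [Matrix.mul_assoc, (hc _).ne']
  exact cancel ▸ hA.mul_diagonal fun j => (inv_pos.2 (hc j)).le

end NonnegRankLE

end NonnegRank

theorem exists_eq_mul_of_rank_le {m n K : Type*} [Field K] [Finite m] [Fintype n]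
    {A : Matrix m n K} {r : ℕ} (hA : A.rank ≤ r) :
    ∃ (P : Matrix m (Fin r) K) (Q : Matrix (Fin r) n K), A = P * Q := by
  classical
  have := Fintype.ofFinite m
  obtain ⟨f, hf⟩ : ∃ f : LinearMap.range A.mulVecLin →ₗ[K] (Fin r → K), Function.Injective f :=
    finrank_le_iff_exists_linearMap.1 (by rwa [Module.finrank_fin_fun])
  obtain ⟨g, hgf⟩ := f.exists_leftInverse_of_injective (LinearMap.ker_eq_bot.2 hf)
  refine ⟨LinearMap.toMatrix' ((LinearMap.range A.mulVecLin).subtype ∘ₗ g),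
    LinearMap.toMatrix' (f ∘ₗ A.mulVecLin.rangeRestrict), ?_⟩
  rw [← LinearMap.toMatrix'_comp, LinearMap.comp_assoc, ← LinearMap.comp_assoc _ f, hgf,
    LinearMap.id_comp]
  exact (LinearMap.toMatrix'_toLin' A).symm

section Bracket

variable {ι K : Type*} [CommRing K]

/-- The bracket `[i, j, k]` of a configuration of vectors `v` in `K³`: the determinant of
`v i, v j, v k`. -/
def bracket (v : ι → Fin 3 → K) (i j k : ι) : K :=
  det (of ![v i, v j, v k])

theorem bracket_rotate (v : ι → Fin 3 → K) (i j k : ι) : bracket v i j k = bracket v j k i := by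
  simp only [bracket, det_fin_three, of_apply, cons_val]
  ring

theorem bracket_swap (v : ι → Fin 3 → K) (i j k : ι) : bracket v j i k = -bracket v i j k := by
  simp only [bracket, det_fin_three, of_apply, cons_val]
  ring

theorem bracket_smul (r : K) (v : ι → Fin 3 → K) (i j k : ι) :
    bracket (r • v) i j k = r ^ 3 * bracket v i j k := by
  simp only [bracket, det_fin_three, of_apply, cons_val, Pi.smul_apply, smul_eq_mul]
  ring

theorem bracket_eq_crossProduct_dotProduct (v : ι → Fin 3 → K) (i j k : ι) :
    bracket v i j k = crossProduct (v i) (v j) ⬝ᵥ v k := by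
  rw [bracket_rotate, bracket_rotate, dotProduct_comm]
  exact (triple_product_eq_det _ _ _).symm

theorem bracket_cramer (v : ι → Fin 3 → K) (φ : Fin 3 → K) (a b c d : ι) :
    bracket v a b c * (φ ⬝ᵥ v d) =
      bracket v d b c * (φ ⬝ᵥ v a) + bracket v a d c * (φ ⬝ᵥ v b) +
        bracket v a b d * (φ ⬝ᵥ v c) := by
  simp only [bracket, det_fin_three, of_apply, cons_val, dotProduct, Fin.sum_univ_three]
  ring

theorem bracket_grassmann_plucker (v : ι → Fin 3 → K) (p a b c d : ι) :
    bracket v p a c * bracket v p b d =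
      bracket v p a b * bracket v p c d + bracket v p a d * bracket v p b c := by
  simp only [bracket, det_fin_three, of_apply, cons_val]
  ring

theorem bracket_mul_bracket_eq_det (φ v : ι → Fin 3 → K) (s : Fin 3 → ι) :
    bracket φ (s 0) (s 1) (s 2) * bracket v (s 0) (s 1) (s 2) =
      det (of fun i j => φ (s i) ⬝ᵥ v (s j)) := by
  rw [bracket, bracket, ← det_transpose (of ![v (s 0), v (s 1), v (s 2)]), ← det_mul]
  congr 1
  ext i j
  fin_cases i <;> fin_cases j <;> rfl

variable [PartialOrder K] [IsStrictOrderedRing K] {v : ι → Fin 3 → K} {p a b c d : ι}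

theorem bracket_mul_bracket_lt (hpad : 0 < bracket v p a d) (hpbc : 0 < bracket v p b c) :
    bracket v p a b * bracket v p c d < bracket v p a c * bracket v p b d := by
  rw [bracket_grassmann_plucker v p a b c d]
  exact lt_add_of_pos_right _ (mul_pos hpad hpbc)

theorem bracket_mul_bracket_lt' (hpab : 0 < bracket v p a b) (hpcd : 0 < bracket v p c d) :
    bracket v p a d * bracket v p b c < bracket v p a c * bracket v p b d := by
  rw [bracket_grassmann_plucker v p a b c d]
  exact lt_add_of_pos_left _ (mul_pos hpab hpcd)

end Bracket

theorem forall_of_forall_imp_add {n : ℕ} [NeZero n] {g : ZMod n} (hg : IsUnit g)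
    {p : ZMod n → Prop} (step : ∀ i, p i → p (i + g)) {i : ZMod n} (hi : p i) (j : ZMod n) :
    p j := by
  obtain ⟨u, rfl⟩ := hg
  have iterate (l : ℕ) : p (i + l * u) := by
    induction l with
    | zero => simpa using hi
    | succ l ih => simpa [add_mul, add_assoc] using step _ ih
  simpa using iterate ((j - i) * ↑u⁻¹ : ZMod n).val

theorem mul_lt_mul_of_mul_lt_mul_of_mul_lt_mul {K : Type*} [CommSemiring K] [LinearOrder K]
    [IsStrictOrderedRing K] {x y z w s t : K} (hx : 0 ≤ x) (hz : 0 ≤ z) (hs : 0 < s) (ht : 0 < t)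
    (h₁ : x * s < y * t) (h₂ : z * t < w * s) : x * z < y * w := by
  refine lt_of_mul_lt_mul_right (a := s * t) ?_ (mul_pos hs ht).le
  calc x * z * (s * t) = x * s * (z * t) := by ring
    _ < y * t * (w * s) := mul_lt_mul'' h₁ h₂ (mul_nonneg hx hs.le) (mul_nonneg hz ht.le)
    _ = y * w * (s * t) := by ring

section Polygon

variable {n : ℕ}

section CyclicShift

variable {α : Type*}

/-- The cyclic sequence `v` renumbered so that it starts at `v k`. -/
def cyclicShift (v : ZMod n → α) (k : ZMod n) : ZMod n → α :=
  fun i => v (k + i)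

theorem cyclicShift_add (v : ZMod n → α) (k l : ZMod n) :
    cyclicShift v (k + l) = cyclicShift (cyclicShift v k) l :=
  funext fun i => congrArg v (add_assoc k l i)

end CyclicShift

section SlackMatrix

variable {K : Type*} [CommRing K]

/-- The slack matrix of the polygon with homogeneous vertex coordinates `v`: row `i`
holds the values at the vertices of the linear form vanishing on the edge from `i` to `i + 1`. -/
def slackMatrix (v : ZMod n → Fin 3 → K) : Matrix (ZMod n) (ZMod n) K :=
  of fun i j => bracket v i (i + 1) j

theorem slackMatrix_cyclicShift (v : ZMod n → Fin 3 → K) (k : ZMod n) :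
    slackMatrix (cyclicShift v k) = (slackMatrix v).submatrix (k + ·) (k + ·) := by
  ext i j
  simp only [slackMatrix, bracket, cyclicShift, of_apply, submatrix_apply, add_assoc]

theorem NonnegRankLE.of_slackMatrix_cyclicShift [PartialOrder K] {v : ZMod n → Fin 3 → K}
    {k : ZMod n} {r : ℕ} (h : NonnegRankLE (slackMatrix (cyclicShift v k)) r) :
    NonnegRankLE (slackMatrix v) r := by
  have unshift : (slackMatrix (cyclicShift v k)).submatrix (· - k) (· - k) = slackMatrix v := by
    ext i j
    simp only [slackMatrix_cyclicShift, submatrix_apply, add_sub_cancel]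
  exact unshift ▸ h.submatrix _ _

end SlackMatrix

section Convex

variable {K : Type*} [CommRing K] [PartialOrder K]

/-- The zero pattern of the slack matrix of a convex `n`-gon: the edge with index `i` contains
exactly the vertices `i` and `i + 1`. -/
structure IsPolygonPattern (U : Matrix (ZMod n) (ZMod n) K) : Prop where
  zero_self (i : ZMod n) : U i i = 0
  zero_add_one (i : ZMod n) : U i (i + 1) = 0
  pos {i j : ZMod n} (hi : j ≠ i) (hi' : j ≠ i + 1) : 0 < U i j

/-- `v` lists, counterclockwise, homogeneous coordinates of the vertices of a convex polygon: all
other vertices lie strictly to the left of each edge. -/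
def IsConvexPolygon (v : ZMod n → Fin 3 → K) : Prop :=
  ∀ ⦃i j : ZMod n⦄, j ≠ i → j ≠ i + 1 → 0 < bracket v i (i + 1) j

protected theorem IsConvexPolygon.cyclicShift {v : ZMod n → Fin 3 → K} (hv : IsConvexPolygon v)
    (k : ZMod n) : IsConvexPolygon (cyclicShift v k) := by
  intro i j hji hji'
  have := hv (i := k + i) (j := k + j) (by simpa using hji) (by simpa [add_assoc] using hji')
  simpa only [bracket, cyclicShift, add_assoc] using this

theorem IsConvexPolygon.isPolygonPattern_slackMatrix {v : ZMod n → Fin 3 → K}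
    (hv : IsConvexPolygon v) : IsPolygonPattern (slackMatrix v) where
  zero_self i := by
    simp [slackMatrix, bracket_eq_crossProduct_dotProduct, dotProduct_comm]
  zero_add_one i := by
    simp [slackMatrix, bracket_eq_crossProduct_dotProduct, dotProduct_comm]
  pos hi hi' := hv hi hi'

namespace IsPolygonPattern

variable {U : Matrix (ZMod n) (ZMod n) K} (hU : IsPolygonPattern U)
include hU

theorem nonneg (i j : ZMod n) : 0 ≤ U i j := by
  by_cases hi : j = i
  · exact hi ▸ (hU.zero_self i).ge
  by_cases hi' : j = i + 1
  · exact hi' ▸ (hU.zero_add_one i).ge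
  exact (hU.pos hi hi').le

protected theorem mul_diagonal [IsStrictOrderedRing K] [NeZero n] {c : ZMod n → K}
    (hc : ∀ j, 0 < c j) : IsPolygonPattern (U * diagonal c) where
  zero_self i := by rw [mul_diagonal, hU.zero_self, zero_mul]
  zero_add_one i := by rw [mul_diagonal, hU.zero_add_one, zero_mul]
  pos {i j} hi hi' := by
    rw [mul_diagonal]
    exact mul_pos (hU.pos hi hi') (hc j)

theorem mul_bracket_eq_mul_bracket {φ v : ZMod n → Fin 3 → K} (hφv : ∀ i j, U i j = φ i ⬝ᵥ v j)
    (i j : ZMod n) :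
    U i j * bracket v i (i + 1) (i + 2) = U i (i + 2) * bracket v i (i + 1) j := by
  have cramer := bracket_cramer v (φ i) i (i + 1) (i + 2) j
  simp only [← hφv, hU.zero_self, hU.zero_add_one, mul_zero, zero_add] at cramer
  rw [mul_comm, cramer, mul_comm]

theorem pos_add_two (h2 : (2 : ZMod n) ≠ 0) (i : ZMod n) : 0 < U i (i + 2) :=
  hU.pos (by simpa using h2) fun h => h2 <| by
    linear_combination 2 * h

theorem pos_add_one_left (h2 : (2 : ZMod n) ≠ 0) (i : ZMod n) : 0 < U (i + 1) i :=
  hU.pos (fun h => h2 <| by linear_combination -2 * h) fun h => h2 <| by linear_combination -h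

end IsPolygonPattern

end Convex

section OrderedRing

variable {K : Type*} [CommRing K] [LinearOrder K] [IsStrictOrderedRing K]
  {U : Matrix (ZMod n) (ZMod n) K} {φ v : ZMod n → Fin 3 → K}

namespace IsPolygonPattern

theorem bracket_ne_zero (hU : IsPolygonPattern U) (hφv : ∀ i j, U i j = φ i ⬝ᵥ v j)
    (h2 : (2 : ZMod n) ≠ 0) (i : ZMod n) : bracket v i (i + 1) (i + 2) ≠ 0 := by
  have add_two : i + 1 + 1 = i + 2 := by rw [add_assoc, one_add_one_eq_two]
  have zero_add_two := hU.zero_add_one (i + 1)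
  have pos_add_two := hU.pos_add_two h2 i
  have pos_add_one := hU.pos_add_one_left h2 i
  have pos_add_two_left := hU.pos_add_one_left h2 (i + 1)
  rw [add_two] at zero_add_two pos_add_two_left
  have det_eq := bracket_mul_bracket_eq_det φ v ![i, i + 1, i + 2]
  simp only [← hφv, det_fin_three, of_apply, cons_val, hU.zero_self, hU.zero_add_one,
    zero_add_two] at det_eq
  intro h
  rw [h] at det_eq
  linarith [mul_pos (mul_pos pos_add_two pos_add_one) pos_add_two_left]

theorem bracket_pos_of_bracket_zero_pos [NeZero n] (hU : IsPolygonPattern U)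
    (hφv : ∀ i j, U i j = φ i ⬝ᵥ v j) (h2 : (2 : ZMod n) ≠ 0) (h0 : 0 < bracket v 0 1 2)
    (i : ZMod n) : 0 < bracket v i (i + 1) (i + 2) := by
  refine forall_of_forall_imp_add (p := fun i => 0 < bracket v i (i + 1) (i + 2)) (i := 0)
    isUnit_one (fun i hi => ?_) (by simpa using h0) i
  have key := hU.mul_bracket_eq_mul_bracket hφv (i + 1) i
  rw [add_assoc i 1 1, one_add_one_eq_two, ← bracket_rotate v i] at key
  rw [add_assoc i 1 1, one_add_one_eq_two]
  exact pos_of_mul_pos_right (key ▸ mul_pos (hU.pos_add_two h2 (i + 1)) hi)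
    (hU.pos_add_one_left h2 i).le

end IsPolygonPattern

end OrderedRing

section OrderedField

variable {K : Type*} [Field K] [LinearOrder K] [IsStrictOrderedRing K] [NeZero n]
  {U : Matrix (ZMod n) (ZMod n) K}

namespace IsPolygonPattern

theorem exists_dotProduct_eq (hU : IsPolygonPattern U) (h2 : (2 : ZMod n) ≠ 0)
    (hrank : U.rank ≤ 3) :
    ∃ φ v : ZMod n → Fin 3 → K, (∀ i j, U i j = φ i ⬝ᵥ v j) ∧ 0 < bracket v 0 1 2 := by
  obtain ⟨P, Q, hPQ⟩ := exists_eq_mul_of_rank_le hrank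
  let φ : ZMod n → Fin 3 → K := P
  let v : ZMod n → Fin 3 → K := Qᵀ
  have hφv (i j : ZMod n) : U i j = φ i ⬝ᵥ v j := congrFun₂ hPQ i j
  -- Scaling `v` by `t` multiplies its brackets by `t ^ 3`, hence `t = [0, 1, 2]` to `t ^ 4`.
  obtain ⟨t, ht⟩ : ∃ t, bracket v 0 1 2 = t := ⟨_, rfl⟩
  have t_ne_zero : t ≠ 0 := by simpa [ht] using hU.bracket_ne_zero hφv h2 0
  refine ⟨t⁻¹ • φ, t • v, fun i j => ?_, ?_⟩
  · rw [hφv, Pi.smul_apply, Pi.smul_apply, smul_dotProduct, dotProduct_smul,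
      inv_smul_smul₀ t_ne_zero]
  · rw [bracket_smul, ht, ← pow_succ]
    exact Even.pow_pos (by decide) t_ne_zero

theorem exists_eq_diagonal_mul_slackMatrix (hU : IsPolygonPattern U) (h2 : (2 : ZMod n) ≠ 0)
    (hrank : U.rank ≤ 3) :
    ∃ (v : ZMod n → Fin 3 → K) (c : ZMod n → K),
      IsConvexPolygon v ∧ (∀ i, 0 < c i) ∧ U = diagonal c * slackMatrix v := by
  obtain ⟨φ, v, hφv, h0⟩ := hU.exists_dotProduct_eq h2 hrank
  have hb := hU.bracket_pos_of_bracket_zero_pos hφv h2 h0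
  have hU2 := hU.pos_add_two h2
  have key := hU.mul_bracket_eq_mul_bracket hφv
  refine ⟨v, fun i => U i (i + 2) / bracket v i (i + 1) (i + 2), fun i j hi hi' => ?_,
    fun i => div_pos (hU2 i) (hb i), ?_⟩
  · exact pos_of_mul_pos_right (key i j ▸ mul_pos (hU.pos hi hi') (hb i)) (hU2 i).le
  · ext i j
    rw [diagonal_mul, slackMatrix, of_apply, div_mul_eq_mul_div, ← key,
      mul_div_cancel_right₀ _ (hb i).ne']

end IsPolygonPattern

end OrderedField

end Polygon

section Orientation

variable {n : ℕ}

theorem natCast_zmod_ne_zero_of_lt {j : ℕ} (hj : 0 < j) (hjn : j < n) : (j : ZMod n) ≠ 0 := by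
  rw [Ne, ZMod.natCast_eq_zero_iff]
  exact Nat.not_dvd_of_pos_of_lt hj hjn

theorem sbtw_zmod_iff_val [NeZero n] {i j k : ZMod n} :
    sbtw i j k ↔ i.val < j.val ∧ j.val < k.val ∨ j.val < k.val ∧ k.val < i.val ∨
      k.val < i.val ∧ i.val < j.val := by
  cases n with
  | zero => exact absurd rfl (NeZero.ne 0)
  | succ n => exact Fin.sbtw_iff

instance decidableSbtwZMod [NeZero n] (i j k : ZMod n) : Decidable (sbtw i j k) :=
  decidable_of_iff _ sbtw_zmod_iff_val.symm

namespace IsConvexPolygon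

variable {K : Type*} [CommRing K] [LinearOrder K] [IsStrictOrderedRing K]
  {v : ZMod n → Fin 3 → K}

theorem bracket_zero_natCast_pos (hv : IsConvexPolygon v) {j k : ℕ} (hj : 0 < j) (hjk : j < k)
    (hk : k < n) : 0 < bracket v 0 j k := by
  have fan {l : ℕ} (hl : 0 < l) (hln : l + 1 < n) : 0 < bracket v 0 1 (l + 1 : ℕ) := by
    have := hv (i := 0) (j := (l + 1 : ℕ)) (natCast_zmod_ne_zero_of_lt l.succ_pos hln)
      (by simpa using natCast_zmod_ne_zero_of_lt hl (by lia))
    rwa [zero_add] at this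
  have edge {l : ℕ} (hl : 0 < l) (hln : l + 1 < n) : 0 < bracket v 0 l (l + 1 : ℕ) := by
    rw [bracket_rotate, Nat.cast_succ]
    refine hv (natCast_zmod_ne_zero_of_lt hl (by lia)).symm ?_
    exact_mod_cast (natCast_zmod_ne_zero_of_lt l.succ_pos hln).symm
  induction k, hjk using Nat.le_induction with
  | base => exact edge hj hk
  | succ k hjk ih =>
    obtain ⟨l, rfl⟩ : ∃ l, k = l + 1 := ⟨k - 1, by lia⟩
    have plucker := bracket_grassmann_plucker v 0 1 j (l + 1 : ℕ) (l + 1 + 1 : ℕ)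
    have h01j : 0 ≤ bracket v 0 1 j := by
      rcases Nat.exists_eq_succ_of_ne_zero hj.ne' with ⟨_ | i, rfl⟩
      · simp [bracket_rotate v 0, bracket_eq_crossProduct_dotProduct]
      · exact (fan i.succ_pos (by lia)).le
    refine pos_of_mul_pos_right (plucker ▸ add_pos_of_nonneg_of_pos ?_ ?_)
      (fan (by lia) (by lia)).le
    · exact mul_nonneg h01j (edge (by lia) hk).le
    · exact mul_pos (fan (by lia) hk) (ih (by lia))

theorem bracket_natCast_pos (hv : IsConvexPolygon v) {i j k : ℕ} (hij : i < j) (hjk : j < k)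
    (hk : k < n) : 0 < bracket v i j k := by
  have := (hv.cyclicShift i).bracket_zero_natCast_pos (j := j - i) (k := k - i) (by lia) (by lia)
    (by lia)
  simpa [bracket, cyclicShift, Nat.cast_sub, hij.le, (hij.trans hjk).le] using this

theorem bracket_pos [NeZero n] (hv : IsConvexPolygon v) {i j k : ZMod n} (h : sbtw i j k) :
    0 < bracket v i j k := by
  have of_val_lt {i j k : ZMod n} (hij : i.val < j.val) (hjk : j.val < k.val) :
      0 < bracket v i j k := by
    simpa using hv.bracket_natCast_pos hij hjk k.val_lt
  rcases sbtw_zmod_iff_val.1 h with ⟨h₁, h₂⟩ | ⟨h₁, h₂⟩ | ⟨h₁, h₂⟩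
  · exact of_val_lt h₁ h₂
  · exact bracket_rotate v i j k ▸ of_val_lt h₁ h₂
  · exact bracket_rotate v k i j ▸ of_val_lt h₁ h₂

end IsConvexPolygon

end Orientation

section ShiftedProducts

variable {G R : Type*} [AddGroup G] [Fintype G] [CommSemiring R]

theorem prod_add_right_mul_add_right (f g : G → R) (i j : G) :
    ∏ k, f (k + i) * g (k + j) = (∏ k, f k) * ∏ k, g k := by
  rw [Finset.prod_mul_distrib]
  exact congrArg₂ (· * ·) (Equiv.prod_comp (Equiv.addRight i) f)
    (Equiv.prod_comp (Equiv.addRight j) g)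

variable [PartialOrder R] [IsStrictOrderedRing R] {f g f' g' : G → R}

theorem prod_mul_prod_le_of_forall_add_right (hf : ∀ k, 0 ≤ f k) (hg : ∀ k, 0 ≤ g k)
    (i j i' j' : G) (h : ∀ k, f (k + i) * g (k + j) ≤ f' (k + i') * g' (k + j')) :
    (∏ k, f k) * ∏ k, g k ≤ (∏ k, f' k) * ∏ k, g' k := by
  rw [← prod_add_right_mul_add_right f g i j, ← prod_add_right_mul_add_right f' g' i' j']
  exact Finset.prod_le_prod (fun k _ => mul_nonneg (hf _) (hg _)) fun k _ => h k

theorem prod_mul_prod_lt_of_forall_add_right (hf : ∀ k, 0 < f k) (hg : ∀ k, 0 < g k)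
    (i j i' j' : G) (h : ∀ k, f (k + i) * g (k + j) < f' (k + i') * g' (k + j')) :
    (∏ k, f k) * ∏ k, g k < (∏ k, f' k) * ∏ k, g' k := by
  rw [← prod_add_right_mul_add_right f g i j, ← prod_add_right_mul_add_right f' g' i' j']
  exact Finset.prod_lt_prod_of_nonempty (fun k _ => mul_pos (hf _) (hg _)) (fun k _ => h k)
    Finset.univ_nonempty

end ShiftedProducts

section HeptagonBrackets

variable {K : Type*} [CommSemiring K] [LinearOrder K] [IsStrictOrderedRing K] {a b c : ZMod 7 → K}

/-- The inequalities that the positivity of the brackets of a convex heptagon implies, via the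
Grassmann–Plücker relations, for `a k = [k, k + 1, k + 2]`, `b k = [k, k + 1, k + 3]` and
`c k = [k, k + 2, k + 3]`. -/
structure IsHeptagonBrackets (a b c : ZMod 7 → K) : Prop where
  pos_a (k : ZMod 7) : 0 < a k
  pos_b (k : ZMod 7) : 0 < b k
  pos_c (k : ZMod 7) : 0 < c k
  a_mul_c_lt (k : ZMod 7) : a k * c (k + 1) < b k * b (k + 1)
  b_mul_a_lt (k : ZMod 7) : b k * a (k + 2) < c k * c (k + 1)
  a_mul_a_lt (k : ZMod 7) : a k * a (k + 2) < c k * b (k + 1)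

namespace IsHeptagonBrackets

/-- The first of the two conditions on the vertex `k` under which the numbering of the heptagon may
start at `k`. -/
def FirstCondition (a b : ZMod 7 → K) (k : ZMod 7) : Prop :=
  a k * a (k + 4) ≤ b (k + 1) * a (k + 5)

/-- The second condition; it mirrors the first one under reversal of the heptagon. -/
def SecondCondition (a c : ZMod 7 → K) (k : ZMod 7) : Prop :=
  a (k + 1) * a (k + 5) ≤ c (k + 3) * a k

variable (h : IsHeptagonBrackets a b c)
include h

theorem firstCondition_or_secondCondition (k : ZMod 7) :
    FirstCondition a b k ∨ SecondCondition a c k := by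
  have add_eq : k + 1 + 1 = k + 2 ∧ k + 2 + 1 = k + 3 ∧ k + 2 + 2 = k + 4 := by
    revert k; decide
  have h₁ := h.a_mul_c_lt (k + 1)
  have h₂ := h.b_mul_a_lt (k + 2)
  simp only [add_eq] at h₁ h₂
  have lt : a (k + 1) * a (k + 4) < b (k + 1) * c (k + 3) :=
    mul_lt_mul_of_mul_lt_mul_of_mul_lt_mul (h.pos_a _).le (h.pos_a _).le (h.pos_c _) (h.pos_b _)
      h₁ (by rwa [mul_comm, mul_comm (c (k + 3))])
  simp only [FirstCondition, SecondCondition]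
  by_contra! hk
  have gt : b (k + 1) * c (k + 3) < a (k + 4) * a (k + 1) :=
    mul_lt_mul_of_mul_lt_mul_of_mul_lt_mul (h.pos_b _).le (h.pos_c _).le (h.pos_a _) (h.pos_a _)
      (mul_comm (a k) _ ▸ hk.1) hk.2
  exact lt_asymm lt (mul_comm (a (k + 4)) _ ▸ gt)

theorem firstCondition_or_secondCondition_add_four (k : ZMod 7) :
    FirstCondition a b k ∨ SecondCondition a c (k + 4) := by
  have add_eq : k + 4 + 1 = k + 5 ∧ k + 4 + 5 = k + 2 ∧ k + 4 + 3 = k := by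
    revert k; decide
  simp only [FirstCondition, SecondCondition, add_eq]
  by_contra! hk
  have gt : b (k + 1) * c k < a k * a (k + 2) :=
    mul_lt_mul_of_mul_lt_mul_of_mul_lt_mul (h.pos_b _).le (h.pos_c _).le (h.pos_a _) (h.pos_a _)
      hk.1 (mul_comm (a (k + 5)) _ ▸ hk.2)
  exact lt_asymm gt (mul_comm (c k) _ ▸ h.a_mul_a_lt k)

theorem exists_firstCondition (hB : ∀ k, SecondCondition a c k) : ∃ k, FirstCondition a b k := by
  by_contra! hA
  simp only [FirstCondition, not_le] at hA
  have pos_a := Finset.prod_pos fun k (_ : k ∈ Finset.univ) => h.pos_a k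
  have pos_b := Finset.prod_pos fun k (_ : k ∈ Finset.univ) => h.pos_b k
  have hba : ∏ k, b k < ∏ k, a k := lt_of_mul_lt_mul_right
    (prod_mul_prod_lt_of_forall_add_right h.pos_b h.pos_a 1 5 0 4 (by simpa using hA)) pos_a.le
  have hac : ∏ k, a k ≤ ∏ k, c k := le_of_mul_le_mul_right
    (prod_mul_prod_le_of_forall_add_right (fun k => (h.pos_a k).le) (fun k => (h.pos_a k).le)
      1 5 3 0 (by simpa [SecondCondition] using hB)) pos_a
  have hacb : (∏ k, a k) * ∏ k, c k < (∏ k, b k) * ∏ k, b k :=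
    prod_mul_prod_lt_of_forall_add_right h.pos_a h.pos_c 0 1 0 1 (by simpa using h.a_mul_c_lt)
  exact hacb.not_ge (mul_le_mul hba.le (hba.le.trans hac) pos_b.le pos_a.le)

theorem exists_secondCondition (hA : ∀ k, FirstCondition a b k) : ∃ k, SecondCondition a c k := by
  by_contra! hB
  simp only [SecondCondition, not_le] at hB
  have pos_a := Finset.prod_pos fun k (_ : k ∈ Finset.univ) => h.pos_a k
  have pos_c := Finset.prod_pos fun k (_ : k ∈ Finset.univ) => h.pos_c k
  have hca : ∏ k, c k < ∏ k, a k := lt_of_mul_lt_mul_right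
    (prod_mul_prod_lt_of_forall_add_right h.pos_c h.pos_a 3 0 1 5 (by simpa using hB)) pos_a.le
  have hab : ∏ k, a k ≤ ∏ k, b k := le_of_mul_le_mul_right
    (prod_mul_prod_le_of_forall_add_right (fun k => (h.pos_a k).le) (fun k => (h.pos_a k).le)
      0 4 1 5 (by simpa [FirstCondition] using hA)) pos_a
  have hbac : (∏ k, b k) * ∏ k, a k < (∏ k, c k) * ∏ k, c k :=
    prod_mul_prod_lt_of_forall_add_right h.pos_b h.pos_a 0 2 0 1 (by simpa using h.b_mul_a_lt)
  exact hbac.not_ge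
    (mul_le_mul (hca.le.trans hab) hca.le pos_c.le (pos_c.le.trans (hca.le.trans hab)))

theorem exists_firstCondition_and_secondCondition :
    ∃ k, FirstCondition a b k ∧ SecondCondition a c k := by
  by_cases hA : ∀ k, FirstCondition a b k
  · obtain ⟨k, hk⟩ := h.exists_secondCondition hA
    exact ⟨k, hA k, hk⟩
  by_contra! hAB
  obtain ⟨i, hi⟩ := not_forall.1 hA
  have no_first := forall_of_forall_imp_add (g := (4 : ZMod 7)) (.of_mul_eq_one 2 (by decide))
    (p := fun k => ¬FirstCondition a b k) (fun k hk hk' => hAB _ hk' <|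
      (h.firstCondition_or_secondCondition_add_four k).resolve_left hk) hi
  obtain ⟨k, hk⟩ := h.exists_firstCondition fun k =>
    (h.firstCondition_or_secondCondition k).resolve_left (no_first k)
  exact no_first k hk

end IsHeptagonBrackets

end HeptagonBrackets

namespace IsConvexPolygon

variable {K : Type*} [CommRing K] [LinearOrder K] [IsStrictOrderedRing K] {v : ZMod 7 → Fin 3 → K}

theorem isHeptagonBrackets (hv : IsConvexPolygon v) :
    IsHeptagonBrackets (fun k => bracket (cyclicShift v k) 0 1 2)
      (fun k => bracket (cyclicShift v k) 0 1 3)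
      (fun k => bracket (cyclicShift v k) 0 2 3) where
  pos_a k := (hv.cyclicShift k).bracket_pos (by decide)
  pos_b k := (hv.cyclicShift k).bracket_pos (by decide)
  pos_c k := (hv.cyclicShift k).bracket_pos (by decide)
  a_mul_c_lt k := by
    have hw := hv.cyclicShift k
    simp only [cyclicShift_add]
    set w := cyclicShift v k
    change bracket w 0 1 2 * bracket w 1 3 4 < bracket w 0 1 3 * bracket w 1 2 4
    rw [bracket_rotate w 0 1 2, bracket_rotate w 0 1 3, mul_comm (bracket w 1 3 0)]
    exact bracket_mul_bracket_lt' (hw.bracket_pos (by decide)) (hw.bracket_pos (by decide))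
  b_mul_a_lt k := by
    have hw := hv.cyclicShift k
    simp only [cyclicShift_add]
    set w := cyclicShift v k
    change bracket w 0 1 3 * bracket w 2 3 4 < bracket w 0 2 3 * bracket w 1 3 4
    rw [← bracket_rotate w 3 0 1, ← bracket_rotate w 3 0 2, bracket_rotate w 1 3 4,
      bracket_rotate w 2 3 4, mul_comm, mul_comm (bracket w 3 0 2)]
    exact bracket_mul_bracket_lt' (hw.bracket_pos (by decide)) (hw.bracket_pos (by decide))
  a_mul_a_lt k := by
    have hw := hv.cyclicShift k
    simp only [cyclicShift_add]
    set w := cyclicShift v k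
    change bracket w 0 1 2 * bracket w 2 3 4 < bracket w 0 2 3 * bracket w 1 2 4
    rw [← bracket_rotate w 2 0 1, bracket_rotate w 0 2 3, bracket_rotate w 1 2 4, mul_comm]
    exact bracket_mul_bracket_lt (hw.bracket_pos (by decide)) (hw.bracket_pos (by decide))

end IsConvexPolygon

section SixRows

theorem zmod_seven_cases (i : ZMod 7) :
    i = 0 ∨ i = 1 ∨ i = 2 ∨ i = 3 ∨ i = 4 ∨ i = 5 ∨ i = 6 := by
  revert i
  decide

/-- The 0-1 matrix whose six rows have the given supports. All rows of a suitably normalized slack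
matrix of a heptagon are nonnegative combinations of its rows. -/
def heptagonFactor (K : Type*) [Zero K] [One K] : Matrix (Fin 6) (ZMod 7) K :=
  of fun l j =>
    if j ∈ (![{0, 1, 6}, {2, 3}, {4, 5}, {1, 2}, {0, 3, 4}, {5, 6}] : Fin 6 → Finset (ZMod 7)) l
    then 1 else 0

variable {K : Type*} [CommRing K] [LinearOrder K] [IsStrictOrderedRing K]

theorem heptagonFactor_nonneg (l : Fin 6) (j : ZMod 7) : 0 ≤ heptagonFactor K l j := by
  rw [heptagonFactor, of_apply]
  split_ifs <;> simp

theorem exists_vecMul_heptagonFactor_eq {x : ZMod 7 → K} (hx : ∀ j, 0 ≤ x j)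
    (h₁₃ : x 0 + x 2 = x 1 + x 3) (h₄₆ : x 0 + x 5 = x 4 + x 6)
    (h₁₄ : x 0 ≤ x 1 + x 4) (h₃₆ : x 0 ≤ x 3 + x 6) :
    ∃ f : Fin 6 → K, (∀ l, 0 ≤ f l) ∧ f ᵥ* heptagonFactor K = x := by
  -- The relations leave one degree of freedom, the coefficient `-m` of the fifth vector.
  obtain ⟨m, hm, hm₁, hm₆, hm_le⟩ : ∃ m ≤ 0, m ≤ x 1 - x 0 ∧ m ≤ x 6 - x 0 ∧
      ∀ t ≤ 0, t ≤ x 1 - x 0 → t ≤ x 6 - x 0 → t ≤ m :=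
    ⟨min 0 (min (x 1 - x 0) (x 6 - x 0)), by simp, by simp, by simp, by simp +contextual⟩
  have h0 : -x 0 ≤ m := hm_le _ (by linarith [hx 0]) (by linarith [hx 1]) (by linarith [hx 6])
  have h3 : -x 3 ≤ m := hm_le _ (by linarith [hx 3]) (by linarith [hx 2]) (by linarith)
  have h4 : -x 4 ≤ m := hm_le _ (by linarith [hx 4]) (by linarith) (by linarith [hx 5])
  refine ⟨![x 0 + m, x 3 + m, x 4 + m, x 1 - x 0 - m, -m, x 6 - x 0 - m], fun l => ?_, ?_⟩
  · fin_cases l <;> dsimp only [Fin.reduceFinMk, cons_val] <;> linarith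
  · ext j
    rcases zmod_seven_cases j with rfl | rfl | rfl | rfl | rfl | rfl | rfl <;>
      simp +decide only [vecMul, dotProduct, Fin.sum_univ_six, heptagonFactor, of_apply, cons_val,
        if_true, if_false, mul_one, mul_zero] <;>
      linarith

end SixRows

theorem IsPolygonPattern.nonnegRankLE_six {K : Type*} [CommRing K] [LinearOrder K]
    [IsStrictOrderedRing K] {M : Matrix (ZMod 7) (ZMod 7) K} (hM : IsPolygonPattern M)
    (h₁₃ : ∀ i, M i 0 + M i 2 = M i 1 + M i 3) (h₄₆ : ∀ i, M i 0 + M i 5 = M i 4 + M i 6)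
    (row_one : M 1 0 ≤ M 1 4) (row_two : M 2 0 ≤ M 2 6) (row_four : M 4 0 ≤ M 4 1)
    (row_five : M 5 0 ≤ M 5 3) : NonnegRankLE M 6 := by
  refine .of_forall_exists_vecMul_eq heptagonFactor_nonneg fun i => ?_
  have h00 := hM.zero_self 0
  have h11 := hM.zero_self 1
  have h33 := hM.zero_self 3
  have h44 := hM.zero_self 4
  have h23 : M 2 3 = 0 := hM.zero_add_one 2
  have h34 : M 3 4 = 0 := hM.zero_add_one 3
  have h56 : M 5 6 = 0 := hM.zero_add_one 5
  have h60 : M 6 0 = 0 := hM.zero_add_one 6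
  have pos (j : ZMod 7) : 0 ≤ M i j := hM.nonneg i j
  have rel₁₃ := h₁₃ i
  have rel₄₆ := h₄₆ i
  refine exists_vecMul_heptagonFactor_eq pos rel₁₃ rel₄₆ ?_ ?_
  · have h₁ := pos 1
    have h₂ := pos 2
    have h₄ := pos 4
    have h₅ := pos 5
    rcases zmod_seven_cases i with rfl | rfl | rfl | rfl | rfl | rfl | rfl <;> linarith
  · have h₂ := pos 2
    have h₃ := pos 3
    have h₅ := pos 5
    have h₆ := pos 6
    rcases zmod_seven_cases i with rfl | rfl | rfl | rfl | rfl | rfl | rfl <;> linarith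

section Normalization

variable {K : Type*} [CommRing K]

/-- Weights for the vertices of a heptagon for which Cramer's rule becomes `v 0 + v 2 = v 1 + v 3`
and `v 0 + v 5 = v 4 + v 6` after rescaling. -/
def heptagonWeights (v : ZMod 7 → Fin 3 → K) : ZMod 7 → K :=
  let α := bracket v 1 2 3
  let β := bracket v 4 5 6
  ![α * β, bracket v 0 2 3 * β, bracket v 0 1 3 * β, bracket v 0 1 2 * β,
    bracket v 0 5 6 * α, bracket v 0 4 6 * α, bracket v 0 4 5 * α]

/-- The slack matrix of the heptagon `v` with vertices rescaled by `heptagonWeights v`. -/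
def normalizedSlackMatrix (v : ZMod 7 → Fin 3 → K) : Matrix (ZMod 7) (ZMod 7) K :=
  slackMatrix v * diagonal (heptagonWeights v)

theorem normalizedSlackMatrix_apply (v : ZMod 7 → Fin 3 → K) (i j : ZMod 7) :
    normalizedSlackMatrix v i j = bracket v i (i + 1) j * heptagonWeights v j :=
  mul_diagonal _ _ _ _

theorem normalizedSlackMatrix_zero_add_two (v : ZMod 7 → Fin 3 → K) (i : ZMod 7) :
    normalizedSlackMatrix v i 0 + normalizedSlackMatrix v i 2 =
      normalizedSlackMatrix v i 1 + normalizedSlackMatrix v i 3 := by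
  have cramer := bracket_cramer v (crossProduct (v i) (v (i + 1))) 1 2 3 0
  rw [bracket_swap v 0 1 3, bracket_rotate v 1 2 0, bracket_rotate v 2 0 1] at cramer
  simp only [← bracket_eq_crossProduct_dotProduct] at cramer
  simp only [normalizedSlackMatrix_apply]
  change _ * (bracket v 1 2 3 * bracket v 4 5 6) + _ * (bracket v 0 1 3 * bracket v 4 5 6) =
    _ * (bracket v 0 2 3 * bracket v 4 5 6) + _ * (bracket v 0 1 2 * bracket v 4 5 6)
  linear_combination bracket v 4 5 6 * cramer

theorem normalizedSlackMatrix_zero_add_five (v : ZMod 7 → Fin 3 → K) (i : ZMod 7) :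
    normalizedSlackMatrix v i 0 + normalizedSlackMatrix v i 5 =
      normalizedSlackMatrix v i 4 + normalizedSlackMatrix v i 6 := by
  have cramer := bracket_cramer v (crossProduct (v i) (v (i + 1))) 4 5 6 0
  rw [bracket_swap v 0 4 6, bracket_rotate v 4 5 0, bracket_rotate v 5 0 4] at cramer
  simp only [← bracket_eq_crossProduct_dotProduct] at cramer
  simp only [normalizedSlackMatrix_apply]
  change _ * (bracket v 1 2 3 * bracket v 4 5 6) + _ * (bracket v 0 4 6 * bracket v 1 2 3) =
    _ * (bracket v 0 5 6 * bracket v 1 2 3) + _ * (bracket v 0 4 5 * bracket v 1 2 3)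
  linear_combination bracket v 1 2 3 * cramer

end Normalization

namespace IsConvexPolygon

section OrderedRing

variable {K : Type*} [CommRing K] [LinearOrder K] [IsStrictOrderedRing K] {v : ZMod 7 → Fin 3 → K}

theorem heptagonWeights_pos (hv : IsConvexPolygon v) (j : ZMod 7) : 0 < heptagonWeights v j := by
  have hα : 0 < bracket v 1 2 3 := hv.bracket_pos (by decide)
  have hβ : 0 < bracket v 4 5 6 := hv.bracket_pos (by decide)
  rcases zmod_seven_cases j with rfl | rfl | rfl | rfl | rfl | rfl | rfl
  · exact mul_pos hα hβ
  all_goals exact mul_pos (hv.bracket_pos (by decide)) ‹_›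

theorem bracket_450_mul_bracket_123_lt (hv : IsConvexPolygon v) :
    bracket v 4 5 0 * bracket v 1 2 3 < bracket v 4 5 1 * bracket v 2 3 0 := by
  have at_four : bracket v 4 5 0 * bracket v 4 1 2 < bracket v 4 5 1 * bracket v 4 0 2 :=
    bracket_mul_bracket_lt (hv.bracket_pos (by decide)) (hv.bracket_pos (by decide))
  have at_two : bracket v 2 3 1 * bracket v 2 4 0 < bracket v 2 3 0 * bracket v 2 4 1 :=
    bracket_mul_bracket_lt' (hv.bracket_pos (by decide)) (hv.bracket_pos (by decide))
  rw [bracket_rotate v 2 4 0, bracket_rotate v 2 4 1] at at_two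
  rw [bracket_rotate v 1 2 3]
  exact mul_lt_mul_of_mul_lt_mul_of_mul_lt_mul (hv.bracket_pos (by decide)).le
    (hv.bracket_pos (by decide)).le (hv.bracket_pos (by decide)) (hv.bracket_pos (by decide))
    at_four at_two

theorem bracket_230_mul_bracket_456_lt (hv : IsConvexPolygon v) :
    bracket v 2 3 0 * bracket v 4 5 6 < bracket v 2 3 6 * bracket v 4 5 0 := by
  have at_three : bracket v 3 5 6 * bracket v 3 0 2 < bracket v 3 5 0 * bracket v 3 6 2 :=
    bracket_mul_bracket_lt (hv.bracket_pos (by decide)) (hv.bracket_pos (by decide))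
  have at_five : bracket v 5 6 4 * bracket v 5 0 3 < bracket v 5 6 3 * bracket v 5 0 4 :=
    bracket_mul_bracket_lt' (hv.bracket_pos (by decide)) (hv.bracket_pos (by decide))
  rw [bracket_rotate v 3 5 6, bracket_rotate v 3 5 0, mul_comm, mul_comm (bracket v 5 0 3)]
    at at_three
  rw [mul_comm (bracket v 5 6 3)] at at_five
  rw [bracket_rotate v 2 3 0, bracket_rotate v 2 3 6, bracket_rotate v 4 5 6,
    bracket_rotate v 4 5 0]
  exact mul_lt_mul_of_mul_lt_mul_of_mul_lt_mul (hv.bracket_pos (by decide)).le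
    (hv.bracket_pos (by decide)).le (hv.bracket_pos (by decide)) (hv.bracket_pos (by decide))
    at_three at_five

theorem nonnegRankLE_normalizedSlackMatrix (hv : IsConvexPolygon v)
    (h₁ : bracket v 0 1 2 * bracket v 4 5 6 ≤ bracket v 1 2 4 * bracket v 5 6 0)
    (h₂ : bracket v 1 2 3 * bracket v 5 6 0 ≤ bracket v 3 5 6 * bracket v 0 1 2) :
    NonnegRankLE (normalizedSlackMatrix v) 6 := by
  have hα : 0 < bracket v 1 2 3 := hv.bracket_pos (by decide)
  have hβ : 0 < bracket v 4 5 6 := hv.bracket_pos (by decide)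
  refine (hv.isPolygonPattern_slackMatrix.mul_diagonal hv.heptagonWeights_pos).nonnegRankLE_six
    (normalizedSlackMatrix_zero_add_two v) (normalizedSlackMatrix_zero_add_five v) ?_ ?_ ?_ ?_ <;>
    rw [← normalizedSlackMatrix, normalizedSlackMatrix_apply, normalizedSlackMatrix_apply]
  · change bracket v 1 2 0 * (bracket v 1 2 3 * bracket v 4 5 6) ≤
      bracket v 1 2 4 * (bracket v 0 5 6 * bracket v 1 2 3)
    rw [← bracket_rotate v 0 1 2, bracket_rotate v 0 5 6]
    linarith [mul_le_mul_of_nonneg_right h₁ hα.le]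
  · change bracket v 2 3 0 * (bracket v 1 2 3 * bracket v 4 5 6) ≤
      bracket v 2 3 6 * (bracket v 0 4 5 * bracket v 1 2 3)
    rw [bracket_rotate v 0 4 5]
    linarith [mul_lt_mul_of_pos_right hv.bracket_230_mul_bracket_456_lt hα]
  · change bracket v 4 5 0 * (bracket v 1 2 3 * bracket v 4 5 6) ≤
      bracket v 4 5 1 * (bracket v 0 2 3 * bracket v 4 5 6)
    rw [bracket_rotate v 0 2 3]
    linarith [mul_lt_mul_of_pos_right hv.bracket_450_mul_bracket_123_lt hβ]
  · change bracket v 5 6 0 * (bracket v 1 2 3 * bracket v 4 5 6) ≤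
      bracket v 5 6 3 * (bracket v 0 1 2 * bracket v 4 5 6)
    rw [← bracket_rotate v 3 5 6]
    linarith [mul_le_mul_of_nonneg_right h₂ hβ.le]

end OrderedRing

theorem nonnegRankLE_slackMatrix {K : Type*} [Field K] [LinearOrder K] [IsStrictOrderedRing K]
    {v : ZMod 7 → Fin 3 → K} (hv : IsConvexPolygon v) : NonnegRankLE (slackMatrix v) 6 := by
  obtain ⟨k, h₁, h₂⟩ := hv.isHeptagonBrackets.exists_firstCondition_and_secondCondition
  simp only [IsHeptagonBrackets.FirstCondition, IsHeptagonBrackets.SecondCondition,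
    cyclicShift_add] at h₁ h₂
  have hw := hv.cyclicShift k
  exact .of_slackMatrix_cyclicShift <| .of_mul_diagonal hw.heptagonWeights_pos <|
    hw.nonnegRankLE_normalizedSlackMatrix h₁ h₂

end IsConvexPolygon

theorem nonneg_rank_lt_seven_of_heptagon_pattern_general {K : Type*} [Field K] [LinearOrder K]
    [IsStrictOrderedRing K] (U : Matrix (ZMod 7) (ZMod 7) K) (hrank : U.rank ≤ 3)
    (hzero : ∀ i j : ZMod 7, (i = j - 1 ∨ i = j) → U i j = 0)
    (hpos : ∀ i j : ZMod 7, ¬(i = j - 1 ∨ i = j) → 0 < U i j) :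
    ∃ (B : Matrix (ZMod 7) (Fin 6) K) (C : Matrix (Fin 6) (ZMod 7) K),
      (∀ i j, 0 ≤ B i j) ∧ (∀ i j, 0 ≤ C i j) ∧ U = B * C := by
  have hU : IsPolygonPattern U :=
    { zero_self := fun i => hzero i i (.inr rfl)
      zero_add_one := fun i => hzero i (i + 1) (.inl (add_sub_cancel_right i 1).symm)
      pos := fun hji hji' => hpos _ _ <| not_or.2
        ⟨fun h => hji' (eq_sub_iff_add_eq.1 h).symm, hji.symm⟩ }
  obtain ⟨v, c, hv, hc, rfl⟩ := hU.exists_eq_diagonal_mul_slackMatrix (by decide) hrank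
  exact hv.nonnegRankLE_slackMatrix.diagonal_mul fun i => (hc i).le

/-- A 7×7 real matrix of classical rank 3, indexed by `ZMod 7`, which
vanishes exactly at the positions `(j-1, j)` and `(j, j)` and is positive elsewhere,
has nonnegative rank strictly less than 7. -/
theorem nonneg_rank_lt_seven_of_heptagon_pattern (U : Matrix (ZMod 7) (ZMod 7) ℝ)
    (hrank : U.rank = 3)
    (hzero : ∀ i j : ZMod 7, (i = j - 1 ∨ i = j) → U i j = 0)
    (hpos : ∀ i j : ZMod 7, ¬(i = j - 1 ∨ i = j) → 0 < U i j) :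
    ∃ (B : Matrix (ZMod 7) (Fin 6) ℝ) (C : Matrix (Fin 6) (ZMod 7) ℝ),
      (∀ i j, 0 ≤ B i j) ∧ (∀ i j, 0 ≤ C i j) ∧ U = B * C :=
  nonneg_rank_lt_seven_of_heptagon_pattern_general U hrank.le hzero hpos
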